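/- If V₀ = 0, there exists a ground state ψ_min ∈ G that is positive, even, and nonincreasing on [0,∞); in particular ψ_min(0) = max_{ξ∈ℝ} ψ_min(ξ). -/

import Mathlib

open MeasureTheory Real

/-- Membership in the energy space `X`. -/
def InX (ψ : ℝ → ℂ) : Prop :=
  Differentiable ℝ ψ ∧
  Integrable (fun ξ : ℝ => ‖ψ ξ‖ ^ 2) ∧
  Integrable (fun ξ : ℝ => ‖deriv ψ ξ‖ ^ 2) ∧
  Integrable (fun ξ : ℝ => ξ ^ 2 * ‖ψ ξ‖ ^ 2) ∧
  Integrable (fun ξ : ℝ => ‖ψ ξ‖ ^ 4)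

/-- Membership in the unit-charge constraint manifold `Σ₁`. -/
def InSigma1 (ψ : ℝ → ℂ) : Prop := InX ψ ∧ (∫ ξ : ℝ, ‖ψ ξ‖ ^ 2) = 1

/-- The Gross–Pitaevskii energy functional with `V₀ = 0`. -/
noncomputable def energy0 (lam : ℝ) (ψ : ℝ → ℂ) : ℝ :=
  (∫ ξ : ℝ, ‖deriv ψ ξ‖ ^ 2) + (∫ ξ : ℝ, ξ ^ 2 * ‖ψ ξ‖ ^ 2)
    + lam / 2 * (∫ ξ : ℝ, ‖ψ ξ‖ ^ 4)

namespace GS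
open Filter Topology Set

/-- squared `L²` norm -/
noncomputable def S (u : ℝ → ℝ) : ℝ := ∫ x, u x ^ 2
/-- quartic integral -/
noncomputable def N (u : ℝ → ℝ) : ℝ := ∫ x, u x ^ 4

lemma S_nonneg (u : ℝ → ℝ) : 0 ≤ S u := integral_nonneg fun _ => sq_nonneg _
lemma N_nonneg (u : ℝ → ℝ) : 0 ≤ N u := integral_nonneg fun _ => by positivity

lemma int_mul {u v : ℝ → ℝ} (hu : MemLp u 2) (hv : MemLp v 2) :
    Integrable (fun x => u x * v x) := hu.integrable_mul hv

lemma S_lin {u v : ℝ → ℝ} (hu : MemLp u 2) (hv : MemLp v 2) (a b : ℝ) :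
    S (fun x => a * u x + b * v x) = a ^ 2 * S u + 2 * a * b * (∫ x, u x * v x) + b ^ 2 * S v := by
  unfold S
  have h : ∀ x, (a * u x + b * v x) ^ 2
      = a ^ 2 * u x ^ 2 + 2 * a * b * (u x * v x) + b ^ 2 * v x ^ 2 := fun x => by ring
  simp_rw [h]
  rw [integral_add, integral_add, integral_const_mul, integral_const_mul, integral_const_mul]
  · exact hu.integrable_sq.const_mul _
  · exact (int_mul hu hv).const_mul _
  · exact (hu.integrable_sq.const_mul _).add ((int_mul hu hv).const_mul _)
  · exact hv.integrable_sq.const_mul _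

lemma memLp_lin {u v : ℝ → ℝ} (hu : MemLp u 2) (hv : MemLp v 2) (a b : ℝ) :
    MemLp (fun x => a * u x + b * v x) 2 := (hu.const_mul a).add (hv.const_mul b)

lemma memLp_sub {u v : ℝ → ℝ} (hu : MemLp u 2) (hv : MemLp v 2) :
    MemLp (fun x => u x - v x) 2 := hu.sub hv

lemma memLp_mid {u v : ℝ → ℝ} (hu : MemLp u 2) (hv : MemLp v 2) :
    MemLp (fun x => (u x + v x) / 2) 2 := by
  have := memLp_lin hu hv (1/2) (1/2)
  convert this using 2; ring

lemma S_mid {u v : ℝ → ℝ} (hu : MemLp u 2) (hv : MemLp v 2) :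
    S (fun x => (u x + v x) / 2) = (S u + S v) / 2 - S (fun x => u x - v x) / 4 := by
  have h1 := S_lin hu hv (1/2) (1/2)
  have h2 := S_lin hu hv 1 (-1)
  have e1 : (fun x => (u x + v x) / 2) = fun x => (1/2) * u x + (1/2) * v x := by ext; ring
  have e2 : (fun x => u x - v x) = fun x => 1 * u x + (-1) * v x := by ext; ring
  rw [e1, e2, h1, h2]; ring

lemma S_sub_le {u v : ℝ → ℝ} (hu : MemLp u 2) (hv : MemLp v 2) :
    S (fun x => u x - v x) ≤ 2 * S u + 2 * S v := by
  have := S_mid hu hv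
  have := S_nonneg (fun x => (u x + v x) / 2)
  linarith

lemma S_add_le {u v : ℝ → ℝ} (hu : MemLp u 2) (hv : MemLp v 2) :
    S (fun x => u x + v x) ≤ 2 * S u + 2 * S v := by
  have h1 := S_lin hu hv 1 1
  have h2 := S_lin hu hv 1 (-1)
  have e1 : (fun x => u x + v x) = fun x => 1 * u x + 1 * v x := by ext; ring
  have := S_nonneg (fun x => 1 * u x + (-1) * v x)
  rw [e1, h1]; linarith

lemma cs {u v : ℝ → ℝ} (hu : MemLp u 2) (hv : MemLp v 2) :
    (∫ x, u x * v x) ^ 2 ≤ S u * S v := by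
  have h : ∀ t : ℝ, 0 ≤ S v * (t * t) + (2 * ∫ x, u x * v x) * t + S u := by
    intro t
    have h1 := S_lin hu hv 1 t
    have := S_nonneg (fun x => 1 * u x + t * v x)
    nlinarith
  have := discrim_le_zero h
  unfold discrim at this
  nlinarith

lemma normsq {u : ℝ → ℝ} (hu : MemLp u 2) : ‖hu.toLp u‖ ^ 2 = S u := by
  rw [← real_inner_self_eq_norm_sq, L2.inner_def]
  unfold S
  apply integral_congr_ae
  filter_upwards [hu.coeFn_toLp] with x hx
  rw [hx]; simp [sq]

lemma norm_sub_sq {u v : ℝ → ℝ} (hu : MemLp u 2 volume) (hv : MemLp v 2 volume) :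
    ‖hu.toLp u - hv.toLp v‖ ^ 2 = S (fun x => u x - v x) := by
  rw [← MemLp.toLp_sub hu hv, normsq (hu.sub hv)]; rfl

lemma tendsto_toLp {ι : Type*} {l : Filter ι} {u : ι → ℝ → ℝ} {v : ℝ → ℝ}
    (hu : ∀ i, MemLp (u i) 2) (hv : MemLp v 2)
    (h : Tendsto (fun i => S (fun x => u i x - v x)) l (𝓝 0)) :
    Tendsto (fun i => (hu i).toLp (u i)) l (𝓝 (hv.toLp v)) := by
  rw [tendsto_iff_norm_sub_tendsto_zero]
  have : (fun i => ‖(hu i).toLp (u i) - hv.toLp v‖) = fun i => √(S (fun x => u i x - v x)) := by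
    ext i; rw [← norm_sub_sq (hu i) hv, Real.sqrt_sq (norm_nonneg _)]
  rw [this]
  simpa using h.sqrt

lemma tendsto_S {ι : Type*} {l : Filter ι} {u : ι → ℝ → ℝ} {v : ℝ → ℝ}
    (hu : ∀ i, MemLp (u i) 2) (hv : MemLp v 2)
    (h : Tendsto (fun i => S (fun x => u i x - v x)) l (𝓝 0)) :
    Tendsto (fun i => S (u i)) l (𝓝 (S v)) := by
  have := (tendsto_toLp hu hv h).norm.pow 2
  simpa only [normsq] using this

lemma complete {u : ℕ → ℝ → ℝ} (hu : ∀ i, MemLp (u i) 2)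
    (h : Tendsto (fun p : ℕ × ℕ => S (fun x => u p.1 x - u p.2 x)) (atTop ×ˢ atTop) (𝓝 0)) :
    ∃ v : ℝ → ℝ, MemLp v 2 ∧ Tendsto (fun i => S (fun x => u i x - v x)) atTop (𝓝 0) := by
  have hc : CauchySeq (fun i => (hu i).toLp (u i)) := by
    rw [Metric.cauchySeq_iff']
    intro ε hε
    have h1 := h.eventually (gt_mem_nhds (show (0:ℝ) < ε ^ 2 by positivity))
    rw [prod_atTop_atTop_eq, eventually_atTop] at h1
    obtain ⟨⟨a, b⟩, hab⟩ := h1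
    refine ⟨max a b, fun n hn => ?_⟩
    have := hab (n, max a b) ⟨le_trans (le_max_left _ _) hn, le_max_right _ _⟩
    simp only at this
    rw [← norm_sub_sq (hu _) (hu _)] at this
    rw [dist_eq_norm]
    exact lt_of_pow_lt_pow_left₀ 2 hε.le this
  obtain ⟨v, hv⟩ := cauchySeq_tendsto_of_complete hc
  have hvm := Lp.memLp v
  refine ⟨v, hvm, ?_⟩
  have h2 := (tendsto_iff_norm_sub_tendsto_zero.1 hv).pow 2
  have e : hvm.toLp v = v := Lp.toLp_coeFn v hvm
  have : (fun i => S (fun x => u i x - v x)) = fun i => ‖(hu i).toLp (u i) - v‖ ^ 2 := by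
    ext i; rw [← norm_sub_sq (hu i) hvm, e]
  rw [this]; simpa using h2

lemma ae_eq_of_tendsto {u : ℕ → ℝ → ℝ} {v w : ℝ → ℝ} (hu : ∀ i, MemLp (u i) 2) (hv : MemLp v 2)
    (h : Tendsto (fun i => S (fun x => u i x - v x)) atTop (𝓝 0))
    (hw : ∀ x, Tendsto (fun i => u i x) atTop (𝓝 (w x))) : v =ᵐ[volume] w := by
  obtain ⟨ns, hns, hae⟩ := (tendstoInMeasure_of_tendsto_Lp (tendsto_toLp hu hv h)).exists_seq_tendsto_ae
  have h1 : ∀ᵐ x, ∀ i, (hu i).toLp (u i) x = u i x := ae_all_iff.2 fun i => (hu i).coeFn_toLp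
  filter_upwards [hae, h1, hv.coeFn_toLp] with x h2 h3 h4
  rw [h4] at h2
  simp only [h3] at h2
  exact tendsto_nhds_unique h2 ((hw x).comp hns.tendsto_atTop)

lemma S_congr {u v : ℝ → ℝ} (h : u =ᵐ[volume] v) : S u = S v := by
  unfold S; apply integral_congr_ae; filter_upwards [h] with x hx; rw [hx]

/-- `g` is the weak derivative of `f`, both in the energy space. -/
structure Pr (f g : ℝ → ℝ) : Prop where
  ftc : ∀ x y, f y - f x = ∫ t in x..y, g t
  mg : MemLp g 2
  mf : MemLp f 2
  mx : MemLp (fun x => x * f x) 2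

lemma ii {g : ℝ → ℝ} (h : MemLp g 2) (a b : ℝ) : IntervalIntegrable g volume a b :=
  ((h.locallyIntegrable (by norm_num)).integrableOn_isCompact isCompact_uIcc).intervalIntegrable

lemma Pr.cont {f g : ℝ → ℝ} (h : Pr f g) : Continuous f := by
  have : f = fun x => f 0 + ∫ t in (0:ℝ)..x, g t := by
    ext x; rw [← h.ftc]; ring
  rw [this]
  exact continuous_const.add (intervalIntegral.continuous_primitive (ii h.mg) 0)

lemma Pr.lin {f g f' g' : ℝ → ℝ} (h : Pr f g) (h' : Pr f' g') (a b : ℝ) :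
    Pr (fun x => a * f x + b * f' x) (fun x => a * g x + b * g' x) where
  ftc x y := by
    rw [intervalIntegral.integral_add ((ii h.mg x y).const_mul a) ((ii h'.mg x y).const_mul b),
      intervalIntegral.integral_const_mul, intervalIntegral.integral_const_mul, ← h.ftc, ← h'.ftc]
    ring
  mg := memLp_lin h.mg h'.mg a b
  mf := memLp_lin h.mf h'.mf a b
  mx := by
    have := memLp_lin h.mx h'.mx a b
    convert this using 2; ring

lemma holder' {f g : ℝ → ℝ} (hftc : ∀ x y, f y - f x = ∫ t in x..y, g t) (hmg : MemLp g 2)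
    {x y : ℝ} (hxy : x < y) :
    (f y - f x) ^ 2 ≤ (y - x) * S g := by
  set c := (f y - f x) / (y - x) with hc
  have hpos : 0 < y - x := sub_pos.2 hxy
  have i1 : IntervalIntegrable (fun t => g t ^ 2) volume x y := hmg.integrable_sq.intervalIntegrable
  have h1 : 0 ≤ ∫ t in x..y, (g t - c) ^ 2 :=
    intervalIntegral.integral_nonneg hxy.le fun _ _ => sq_nonneg _
  have h2 : ∫ t in x..y, (g t - c) ^ 2
      = (∫ t in x..y, g t ^ 2) - 2 * c * (f y - f x) + c ^ 2 * (y - x) := by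
    have : ∀ t, (g t - c) ^ 2 = g t ^ 2 - 2 * c * g t + c ^ 2 := fun t => by ring
    simp_rw [this]
    rw [intervalIntegral.integral_add (i1.sub ((ii hmg x y).const_mul _)) (by simp),
      intervalIntegral.integral_sub i1 ((ii hmg x y).const_mul _),
      intervalIntegral.integral_const_mul, ← hftc]
    simp; ring
  have h3 : ∫ t in x..y, g t ^ 2 ≤ S g := by
    rw [intervalIntegral.integral_of_le hxy.le]
    exact setIntegral_le_integral hmg.integrable_sq (ae_of_all _ fun _ => sq_nonneg _)
  have h4 : f y - f x = c * (y - x) := by rw [hc]; field_simp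
  rw [h4] at h2 ⊢
  rw [h2] at h1
  have : c ^ 2 * (y - x) ≤ S g := by nlinarith
  nlinarith

lemma holder {f g : ℝ → ℝ} (hftc : ∀ x y, f y - f x = ∫ t in x..y, g t) (hmg : MemLp g 2)
    (x y : ℝ) :
    (f y - f x) ^ 2 ≤ |y - x| * S g := by
  rcases lt_trichotomy x y with hxy | rfl | hxy
  · rw [abs_of_pos (sub_pos.2 hxy)]; exact holder' hftc hmg hxy
  · simp
  · rw [abs_of_neg (sub_neg.2 hxy)]
    have := holder' hftc hmg hxy
    nlinarith

lemma Pr.holder {f g : ℝ → ℝ} (h : Pr f g) (x y : ℝ) :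
    (f y - f x) ^ 2 ≤ |y - x| * S g := GS.holder h.ftc h.mg x y

lemma int_sq_le {u : ℝ → ℝ} (h : MemLp u 2) (x y : ℝ) : (∫ t in x..y, u t) ^ 2 ≤ |y - x| * S u := by
  have h1 : ∀ x y, (∫ t in (0:ℝ)..y, u t) - (∫ t in (0:ℝ)..x, u t) = ∫ t in x..y, u t := fun x y =>
    intervalIntegral.integral_interval_sub_left (ii h _ _) (ii h _ _)
  have := holder h1 h x y
  rwa [h1] at this

lemma Pr.sup {f g : ℝ → ℝ} (h : Pr f g) {δ : ℝ} (hδ : 0 < δ) (x : ℝ) :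
    f x ^ 2 ≤ 2 / δ * S f + 2 * δ * S g := by
  have h1 : ∫ y in x..(x+δ), (f x ^ 2 - 2 * δ * S g) ≤ ∫ y in x..(x+δ), 2 * f y ^ 2 := by
    apply intervalIntegral.integral_mono_on (by linarith) (by simp)
    · exact (h.mf.integrable_sq.const_mul 2).intervalIntegrable
    · intro y hy
      have := h.holder x y
      rw [abs_of_nonneg (by linarith [hy.1])] at this
      have h3 : (y - x) * S g ≤ δ * S g :=
        mul_le_mul_of_nonneg_right (by linarith [hy.2]) (S_nonneg _)
      nlinarith [sq_nonneg (2 * f y - f x)]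
  have h2 : ∫ y in x..(x+δ), 2 * f y ^ 2 ≤ 2 * S f := by
    rw [intervalIntegral.integral_const_mul, intervalIntegral.integral_of_le (by linarith)]
    have : ∫ t in Ioc x (x+δ), f t ^ 2 ≤ S f :=
      setIntegral_le_integral h.mf.integrable_sq (ae_of_all _ fun _ => sq_nonneg _)
    linarith
  rw [intervalIntegral.integral_const] at h1
  simp only [add_sub_cancel_left, smul_eq_mul] at h1
  have h3 : δ * (f x ^ 2 - 2 * δ * S g) ≤ 2 * S f := h1.trans h2
  have : f x ^ 2 - 2 * δ * S g ≤ 2 * S f / δ := by rw [le_div_iff₀ hδ]; linarith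
  calc f x ^ 2 ≤ 2 * S f / δ + 2 * δ * S g := by linarith
    _ = _ := by ring

lemma int4 {f : ℝ → ℝ} (hf : MemLp f 2) {B : ℝ} (hB : ∀ x, f x ^ 2 ≤ B) :
    Integrable (fun x => f x ^ 4) := by
  refine (hf.integrable_sq.const_mul B).mono' (hf.1.pow 4) (ae_of_all _ fun x => ?_)
  rw [Real.norm_of_nonneg (by positivity)]
  nlinarith [hB x, sq_nonneg (f x)]

lemma Pr.bdd {f g : ℝ → ℝ} (h : Pr f g) : ∃ B, ∀ x, f x ^ 2 ≤ B := ⟨_, h.sup one_pos⟩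

lemma Pr.int4 {f g : ℝ → ℝ} (h : Pr f g) : Integrable (fun x => f x ^ 4) :=
  let ⟨_, hB⟩ := h.bdd; GS.int4 h.mf hB

lemma N_le {f : ℝ → ℝ} (hf : MemLp f 2) {B : ℝ} (hB : ∀ x, f x ^ 2 ≤ B) : N f ≤ B * S f := by
  unfold N S
  rw [← integral_const_mul]
  refine integral_mono (GS.int4 hf hB) (hf.integrable_sq.const_mul B) fun x => ?_
  simp only
  nlinarith [hB x, sq_nonneg (f x)]

lemma N_diff {u v : ℝ → ℝ} (hu : MemLp u 2) (hv : MemLp v 2) {B : ℝ}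
    (hB : ∀ x, u x ^ 2 ≤ B) (hB' : ∀ x, v x ^ 2 ≤ B) :
    |N u - N v| ≤ 2 * B * √(S (fun x => u x - v x) * (2 * S u + 2 * S v)) := by
  have hB0 : 0 ≤ B := (sq_nonneg _).trans (hB 0)
  have ha : MemLp (fun x => |u x - v x|) 2 := (memLp_sub hu hv).abs
  have hb : MemLp (fun x => |u x + v x|) 2 := (hu.add hv).abs
  have e1 : S (fun x => |u x - v x|) = S (fun x => u x - v x) := by simp [S]
  have e2 : S (fun x => |u x + v x|) = S (fun x => u x + v x) := by simp [S]
  have h1 : |N u - N v| ≤ 2 * B * ∫ x, |u x - v x| * |u x + v x| := by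
    unfold N
    rw [← integral_sub (int4 hu hB) (int4 hv hB'), ← integral_const_mul]
    refine (abs_integral_le_integral_abs).trans ?_
    refine integral_mono ((int4 hu hB).sub (int4 hv hB')).abs ((int_mul ha hb).const_mul _) fun x => ?_
    simp only
    have : u x ^ 4 - v x ^ 4 = ((u x - v x) * (u x + v x)) * (u x ^ 2 + v x ^ 2) := by ring
    rw [this, abs_mul, abs_mul, abs_of_nonneg (by positivity : 0 ≤ u x ^ 2 + v x ^ 2), mul_comm]
    exact mul_le_mul_of_nonneg_right (by linarith [hB x, hB' x]) (by positivity)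
  refine h1.trans (mul_le_mul_of_nonneg_left ?_ (by linarith))
  apply Real.le_sqrt_of_sq_le
  refine (cs ha hb).trans ?_
  rw [e1, e2]
  exact mul_le_mul_of_nonneg_left (S_add_le hu hv) (S_nonneg _)

end GS

namespace GS
open Filter Topology Set

/-- energy of a pair -/
noncomputable def En (lam : ℝ) (f g : ℝ → ℝ) : ℝ := S g + S (fun x => x * f x) + lam / 2 * N f

lemma Pr.test {φ : ℝ → ℝ} (h : ContDiff ℝ 1 φ) (hc : HasCompactSupport φ) : Pr φ (deriv φ) where
  ftc x y := by
    rw [intervalIntegral.integral_deriv_eq_sub (fun x _ => (h.differentiable (by norm_num)) x)]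
    exact (h.continuous_deriv (by norm_num)).intervalIntegrable _ _
  mg := (h.continuous_deriv (by norm_num)).memLp_of_hasCompactSupport hc.deriv
  mf := h.continuous.memLp_of_hasCompactSupport hc
  mx := (continuous_id.mul h.continuous).memLp_of_hasCompactSupport hc.mul_left

lemma S_smul (c : ℝ) (u : ℝ → ℝ) : S (fun x => c * u x) = c ^ 2 * S u := by
  unfold S; rw [← integral_const_mul]; congr 1; ext; ring
lemma N_smul (c : ℝ) (u : ℝ → ℝ) : N (fun x => c * u x) = c ^ 4 * N u := by
  unfold N; rw [← integral_const_mul]; congr 1; ext; ring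

lemma Pr.smul {f g : ℝ → ℝ} (h : Pr f g) (c : ℝ) : Pr (fun x => c * f x) (fun x => c * g x) := by
  have := h.lin h c 0
  simpa using this

lemma exists_unit : ∃ f g, Pr f g ∧ S f = 1 := by
  let b : ContDiffBump (0:ℝ) := ⟨1, 2, by norm_num, by norm_num⟩
  have h : Pr b (deriv b) := Pr.test b.contDiff b.hasCompactSupport
  have hp : 0 < S b := by
    unfold S
    rw [integral_pos_iff_support_of_nonneg (fun _ => sq_nonneg _) h.mf.integrable_sq]
    have : Function.support (fun x => b x ^ 2) = Metric.ball 0 2 := by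
      rw [← b.support_eq]; ext; simp
    rw [this]; simp
  refine ⟨_, _, h.smul (1 / √(S b)), ?_⟩
  rw [S_smul, div_pow, Real.sq_sqrt hp.le]; field_simp

lemma coercive (lam : ℝ) : ∃ C : ℝ, ∀ f g, Pr f g → S f = 1 →
    S g / 2 + S (fun x => x * f x) - C ≤ En lam f g := by
  set δ := 1 / (2 * (|lam| + 1)) with hδ
  have hl := abs_nonneg lam
  have hδ0 : 0 < δ := by positivity
  have hδ1 : |lam| * δ ≤ 1 / 2 := by
    rw [hδ, mul_one_div, div_le_iff₀ (by positivity)]; linarith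
  refine ⟨|lam| / δ, fun f g h hm => ?_⟩
  have h1 := N_le h.mf (h.sup hδ0)
  rw [hm] at h1
  have h2 : |lam| / 2 * N f ≤ |lam| / 2 * (2 / δ + 2 * δ * S g) :=
    mul_le_mul_of_nonneg_left (by linarith) (by positivity)
  have h3 : -(|lam| / 2 * N f) ≤ lam / 2 * N f := by
    nlinarith [neg_abs_le lam, N_nonneg f]
  have h4 : |lam| / 2 * (2 / δ + 2 * δ * S g) = |lam| / δ + |lam| * δ * S g := by
    field_simp
  have h5 := mul_le_mul_of_nonneg_right hδ1 (S_nonneg g)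
  unfold En
  linarith

/-- the values of the energy -/
def Vals (lam : ℝ) : Set ℝ := {e | ∃ f g, Pr f g ∧ S f = 1 ∧ e = En lam f g}

lemma vals_bdd (lam : ℝ) : BddBelow (Vals lam) := by
  obtain ⟨C, hC⟩ := coercive lam
  refine ⟨-C, ?_⟩
  rintro _ ⟨f, g, h, hm, rfl⟩
  have := hC f g h hm
  have := S_nonneg g
  have := S_nonneg fun x => x * f x
  linarith

lemma vals_ne (lam : ℝ) : (Vals lam).Nonempty := by
  obtain ⟨f, g, h, hm⟩ := exists_unit
  exact ⟨_, f, g, h, hm, rfl⟩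

lemma inf_le (lam : ℝ) {f g : ℝ → ℝ} (h : Pr f g) (hm : S f = 1) :
    sInf (Vals lam) ≤ En lam f g := csInf_le (vals_bdd lam) ⟨f, g, h, hm, rfl⟩

lemma scaled (lam : ℝ) {f g : ℝ → ℝ} (h : Pr f g) :
    sInf (Vals lam) * S f ^ 2 ≤ S f * (S g + S (fun x => x * f x)) + lam / 2 * N f := by
  rcases (S_nonneg f).eq_or_lt with h0 | h0
  · have : N f = 0 := by
      have h1 := N_le h.mf (h.sup one_pos)
      rw [← h0] at h1
      have := N_nonneg f
      linarith
    rw [this, ← h0]; simp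
  · set c := 1 / √(S f) with hc
    have hc2 : c ^ 2 = 1 / S f := by rw [hc, div_pow, Real.sq_sqrt h0.le]; simp
    have h1 := inf_le lam (h.smul c) (by rw [S_smul, hc2]; field_simp)
    unfold En at h1
    have e : (fun x => x * (c * f x)) = fun x => c * (x * f x) := by ext; ring
    rw [e, S_smul, S_smul, N_smul, show c ^ 4 = (c ^ 2) ^ 2 by ring, hc2] at h1
    have h2 := mul_le_mul_of_nonneg_right h1 (sq_nonneg (S f))
    refine h2.trans_eq ?_
    field_simp

/-- Pointwise convergent subsequence. -/
lemma extract {f g : ℕ → ℝ → ℝ} (h : ∀ n, Pr (f n) (g n)) {K B : ℝ}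
    (hK : ∀ n, S (g n) ≤ K) (hB : ∀ n x, f n x ^ 2 ≤ B) :
    ∃ φ : ℕ → ℕ, StrictMono φ ∧ ∃ F : ℝ → ℝ, ∀ x, Tendsto (fun n => f (φ n) x) atTop (𝓝 (F x)) := by
  have hB0 : 0 ≤ B := (sq_nonneg _).trans (hB 0 0)
  have hc : IsCompact (Set.pi univ fun _ : ℚ => Icc (-√B) (√B)) :=
    isCompact_univ_pi fun _ => isCompact_Icc
  obtain ⟨a, -, φ, hφ, ha⟩ := hc.tendsto_subseq (x := fun n (q : ℚ) => f n q) (by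
    intro n q _
    exact abs_le.1 (Real.abs_le_sqrt (hB n q)))
  rw [tendsto_pi_nhds] at ha
  refine ⟨φ, hφ, ?_⟩
  have key : ∀ x, ∃ y, Tendsto (fun n => f (φ n) x) atTop (𝓝 y) := by
    intro x
    apply cauchySeq_tendsto_of_complete
    rw [Metric.cauchySeq_iff']
    intro ε hε
    have hK0 : 0 ≤ K := (S_nonneg _).trans (hK 0)
    set η := (ε / 4) ^ 2 / (K + 1) with hη
    have hη0 : 0 < η := by positivity
    obtain ⟨q, hq1, hq2⟩ := exists_rat_btwn (show x < x + η by linarith)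
    have hx : ∀ n, |f n q - f n x| ≤ ε / 4 := by
      intro n
      apply abs_le_of_sq_le_sq _ (by positivity)
      refine ((h n).holder x q).trans ?_
      rw [abs_of_pos (by linarith)]
      calc (q - x) * S (g n) ≤ η * (K + 1) :=
            mul_le_mul (by linarith) (by linarith [hK n]) (S_nonneg _) hη0.le
        _ = _ := by rw [hη]; field_simp
    obtain ⟨M, hM⟩ := Metric.tendsto_atTop.1 (ha q) (ε / 8) (by positivity)
    refine ⟨M, fun n hn => ?_⟩
    have h1 := hM n hn
    have h2 := hM M le_rfl
    simp only [Function.comp, Real.dist_eq] at h1 h2 ⊢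
    have h3 := hx (φ n)
    have h4 := hx (φ M)
    rw [abs_lt] at *
    rw [abs_le] at *
    constructor <;> linarith [h1.1, h1.2]
  choose F hF using key
  exact ⟨F, hF⟩

lemma cauchyL2 {f g : ℕ → ℝ → ℝ} (h : ∀ n, Pr (f n) (g n)) {K B : ℝ}
    (hK : ∀ n, S (fun x => x * f n x) ≤ K) (hB : ∀ n x, f n x ^ 2 ≤ B)
    {F : ℝ → ℝ} (hF : ∀ x, Tendsto (fun n => f n x) atTop (𝓝 (F x))) :
    Tendsto (fun p : ℕ × ℕ => S (fun x => f p.1 x - f p.2 x)) (atTop ×ˢ atTop) (𝓝 0) := by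
  have hFm : Measurable F := measurable_of_tendsto_metrizable (fun n => (h n).cont.measurable)
    (tendsto_pi_nhds.2 hF)
  have hFB : ∀ x, F x ^ 2 ≤ B := fun x => le_of_tendsto ((hF x).pow 2) (Eventually.of_forall fun n => hB n x)
  have hK0 : 0 ≤ K := (S_nonneg _).trans (hK 0)
  have bd : ∀ n x, ‖(f n x - F x) ^ 2‖ ≤ 4 * B := by
    intro n x
    rw [Real.norm_of_nonneg (sq_nonneg _)]
    nlinarith [hB n x, hFB x, sq_nonneg (f n x + F x)]
  have iF : ∀ R n, IntegrableOn (fun x => (f n x - F x) ^ 2) (Icc (-R) R) := by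
    intro R n
    refine Measure.integrableOn_of_bounded (M := 4 * B) (by simp) ?_ (ae_of_all _ (bd n))
    exact (((h n).cont.measurable.sub hFm).pow_const 2).aestronglyMeasurable
  have hloc : ∀ R : ℝ, Tendsto (fun n => ∫ x in Icc (-R) R, (f n x - F x) ^ 2) atTop (𝓝 0) := by
    intro R
    have := tendsto_integral_of_dominated_convergence (μ := volume.restrict (Icc (-R) R))
      (F := fun n x => (f n x - F x) ^ 2) (f := fun _ => 0) (fun _ => 4 * B)
      (fun n => (iF R n).1) continuous_const.integrableOn_Icc (fun n => ae_of_all _ (bd n))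
      (ae_of_all _ fun x => by simpa using ((hF x).sub_const (F x)).pow 2)
    simpa using this
  rw [Metric.tendsto_nhds]
  intro ε hε
  set R := √(8 * K / ε) + 1 with hR
  have hR0 : 0 < R := by positivity
  have hR2 : 8 * K / ε < R ^ 2 := by
    have := Real.sq_sqrt (show 0 ≤ 8 * K / ε by positivity)
    have h0 := Real.sqrt_nonneg (8 * K / ε)
    nlinarith
  have hR3 : 4 * K / R ^ 2 < ε / 2 := by
    rw [div_lt_iff₀ (by positivity)] at hR2 ⊢; linarith
  have hs := (hloc R).eventually (gt_mem_nhds (show (0:ℝ) < ε / 8 by positivity))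
  filter_upwards [hs.prod_mk hs] with p hp
  rw [Real.dist_eq, sub_zero, abs_of_nonneg (S_nonneg _)]
  set u := fun x => f p.1 x - f p.2 x with hu
  have hmu : MemLp u 2 := memLp_sub (h _).mf (h _).mf
  have hmx : MemLp (fun x => x * u x) 2 := by
    have := memLp_sub (h p.1).mx (h p.2).mx
    convert this using 2; ring
  have hSx : S (fun x => x * u x) ≤ 4 * K := by
    have h1 := S_sub_le (h p.1).mx (h p.2).mx
    have e : (fun x => x * u x) = fun x => x * f p.1 x - x * f p.2 x := by ext; simp [hu]; ring
    rw [e]; linarith [hK p.1, hK p.2]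
  have hsplit : S u = (∫ x in Icc (-R) R, u x ^ 2) + ∫ x in (Icc (-R) R)ᶜ, u x ^ 2 :=
    (integral_add_compl measurableSet_Icc hmu.integrable_sq).symm
  have ha : ∫ x in Icc (-R) R, u x ^ 2 ≤ ε / 2 := by
    calc ∫ x in Icc (-R) R, u x ^ 2
        ≤ ∫ x in Icc (-R) R, (2 * (f p.1 x - F x) ^ 2 + 2 * (f p.2 x - F x) ^ 2) := by
          refine integral_mono hmu.integrable_sq.integrableOn
            (((iF R _).const_mul 2).add ((iF R _).const_mul 2)) fun x => ?_
          simp only [hu]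
          nlinarith [sq_nonneg ((f p.1 x - F x) + (f p.2 x - F x))]
      _ = 2 * (∫ x in Icc (-R) R, (f p.1 x - F x) ^ 2) + 2 * ∫ x in Icc (-R) R, (f p.2 x - F x) ^ 2 := by
          rw [integral_add ((iF R _).const_mul 2) ((iF R _).const_mul 2), integral_const_mul,
            integral_const_mul]
      _ ≤ ε / 2 := by linarith [hp.1, hp.2]
  have hb : ∫ x in (Icc (-R) R)ᶜ, u x ^ 2 ≤ 4 * K / R ^ 2 := by
    calc ∫ x in (Icc (-R) R)ᶜ, u x ^ 2 ≤ ∫ x in (Icc (-R) R)ᶜ, (1 / R ^ 2) * (x * u x) ^ 2 := by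
          refine setIntegral_mono_on hmu.integrable_sq.integrableOn
            (hmx.integrable_sq.const_mul _).integrableOn measurableSet_Icc.compl fun x hx => ?_
          have : R ^ 2 ≤ x ^ 2 := by
            by_contra! hcon
            have := abs_lt.1 (abs_lt_of_sq_lt_sq hcon hR0.le)
            exact hx ⟨this.1.le, this.2.le⟩
          rw [one_div, ← div_eq_inv_mul, le_div_iff₀ (by positivity)]
          nlinarith [sq_nonneg (u x)]
      _ ≤ ∫ x, (1 / R ^ 2) * (x * u x) ^ 2 :=
          setIntegral_le_integral (hmx.integrable_sq.const_mul _) (ae_of_all _ fun x => by positivity)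
      _ = 1 / R ^ 2 * S (fun x => x * u x) := by rw [integral_const_mul]; rfl
      _ ≤ 1 / R ^ 2 * (4 * K) := mul_le_mul_of_nonneg_left hSx (by positivity)
      _ = _ := by ring
  linarith

end GS

namespace GS
open Filter Topology Set

lemma cauchy_key (lam : ℝ) {f g : ℕ → ℝ → ℝ} (hP : ∀ n, Pr (f n) (g n)) (hm : ∀ n, S (f n) = 1)
    {B : ℝ} (hB : ∀ n x, f n x ^ 2 ≤ B)
    (hε : Tendsto (fun p : ℕ × ℕ => S (fun x => f p.1 x - f p.2 x)) (atTop ×ˢ atTop) (𝓝 0))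
    (hEn : Tendsto (fun n => En lam (f n) (g n)) atTop (𝓝 (sInf (Vals lam)))) :
    Tendsto (fun p : ℕ × ℕ => S (fun x => g p.1 x - g p.2 x)
      + S (fun x => x * f p.1 x - x * f p.2 x)) (atTop ×ˢ atTop) (𝓝 0) := by
  set I := sInf (Vals lam) with hI
  have hB0 : 0 ≤ B := (sq_nonneg _).trans (hB 0 0)
  set ε := fun p : ℕ × ℕ => S (fun x => f p.1 x - f p.2 x) with hεd
  have hE1 : Tendsto (fun p : ℕ × ℕ => En lam (f p.1) (g p.1)) (atTop ×ˢ atTop) (𝓝 I) :=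
    hEn.comp tendsto_fst
  have hE2 : Tendsto (fun p : ℕ × ℕ => En lam (f p.2) (g p.2)) (atTop ×ˢ atTop) (𝓝 I) :=
    hEn.comp tendsto_snd
  set bd := fun p : ℕ × ℕ => 8 * ((1 - ε p / 4) * ((En lam (f p.1) (g p.1) + En lam (f p.2) (g p.2)) / 2
      - I * (1 - ε p / 4)) + |lam| / 2 * (2 * B * √(ε p) + ε p / 4 * B)) with hbd
  have hlim : Tendsto bd (atTop ×ˢ atTop) (𝓝 0) := by
    have hM : Tendsto (fun p => 1 - ε p / 4) (atTop ×ˢ atTop) (𝓝 (1 - 0 / 4)) :=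
      (hε.div_const 4).const_sub 1
    have := ((hM.mul (((hE1.add hE2).div_const 2).sub (hM.const_mul I))).add
      (((hε.sqrt.const_mul (2 * B)).add ((hε.div_const 4).mul_const B)).const_mul (|lam| / 2))).const_mul 8
    refine this.trans_eq ?_
    congr 1
    simp
  refine squeeze_zero' (Eventually.of_forall fun p => add_nonneg (S_nonneg _) (S_nonneg _)) ?_ hlim
  filter_upwards [hε.eventually (gt_mem_nhds (show (0:ℝ) < 2 by norm_num))] with p hp
  obtain ⟨n, m⟩ := p
  have h1 := hP n
  have h2 := hP m
  have hu : Pr (fun x => (f n x + f m x) / 2) (fun x => (g n x + g m x) / 2) := by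
    have := h1.lin h2 (1/2) (1/2)
    convert this using 2 <;> ring
  set u := fun x => (f n x + f m x) / 2 with hud
  have hsc := scaled lam hu
  have huB : ∀ x, u x ^ 2 ≤ B := fun x => by
    simp only [hud]; nlinarith [hB n x, hB m x, sq_nonneg (f n x - f m x)]
  have e1 : S u = 1 - ε (n, m) / 4 := by
    rw [hud, S_mid h1.mf h2.mf, hm, hm]; simp [hεd]
  have e2 := S_mid h1.mg h2.mg
  have e3 : S (fun x => x * u x) = (S (fun x => x * f n x) + S (fun x => x * f m x)) / 2
      - S (fun x => x * f n x - x * f m x) / 4 := by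
    have := S_mid h1.mx h2.mx
    rw [← this]; congr 1; ext x; simp only [hud]; ring
  have hε0 : 0 ≤ ε (n, m) := S_nonneg _
  have hN : ∀ k, (S (fun x => f k x - u x) = ε (n, m) / 4) → |N (f k) - N u| ≤ 2 * B * √(ε (n, m)) := by
    intro k hk
    refine (N_diff (hP k).mf hu.mf (hB k) huB).trans ?_
    rw [hk, hm, e1]
    gcongr
    nlinarith
  have d1 := hN n (by
    have : (fun x => f n x - u x) = fun x => (1/2) * (f n x - f m x) := by ext; simp only [hud]; ring
    rw [this, S_smul]; simp only [hεd]; ring)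
  have d2 := hN m (by
    have : (fun x => f m x - u x) = fun x => (-1/2) * (f n x - f m x) := by ext; simp only [hud]; ring
    rw [this, S_smul]; simp only [hεd]; ring)
  have b1 := N_le h1.mf (hB n)
  have b2 := N_le h2.mf (hB m)
  rw [hm] at b1 b2
  have n1 := N_nonneg (f n)
  have n2 := N_nonneg (f m)
  rw [e1, e2, e3] at hsc
  simp only [hbd, En]
  set r := 2 * B * √(ε (n, m))
  set q1 := S (fun x => g n x - g m x)
  set q2 := S (fun x => x * f n x - x * f m x)
  have hq1 : 0 ≤ q1 := S_nonneg _
  have hq2 : 0 ≤ q2 := S_nonneg _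
  set e := ε (n, m)
  have hA : |N u - (1 - e / 4) * ((N (f n) + N (f m)) / 2)| ≤ r + e / 4 * B := by
    have : 0 ≤ e / 4 * ((N (f n) + N (f m)) / 2) := by positivity
    have : e / 4 * ((N (f n) + N (f m)) / 2) ≤ e / 4 * B :=
      mul_le_mul_of_nonneg_left (by linarith) (by positivity)
    rw [abs_le] at *
    constructor <;> linarith [d1.1, d1.2, d2.1, d2.2]
  have hA' : lam / 2 * (N u - (1 - e / 4) * ((N (f n) + N (f m)) / 2)) ≤ |lam| / 2 * (r + e / 4 * B) := by
    refine (le_abs_self _).trans ?_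
    rw [abs_mul, abs_div, abs_two]
    exact mul_le_mul_of_nonneg_left hA (by positivity)
  have hq : (q1 + q2) * (1 / 2) ≤ (q1 + q2) * (1 - e / 4) :=
    mul_le_mul_of_nonneg_left (by linarith) (by linarith)
  rw [← hI] at hsc
  linarith

lemma min_of_seq (lam : ℝ) {f g : ℕ → ℝ → ℝ} (hP : ∀ n, Pr (f n) (g n)) (hm : ∀ n, S (f n) = 1)
    {B K : ℝ} (hK : ∀ n, S (fun x => x * f n x) ≤ K) (hB : ∀ n x, f n x ^ 2 ≤ B)
    {F : ℝ → ℝ} (hF : ∀ x, Tendsto (fun n => f n x) atTop (𝓝 (F x)))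
    (hEn : Tendsto (fun n => En lam (f n) (g n)) atTop (𝓝 (sInf (Vals lam)))) :
    ∃ f g, Pr f g ∧ S f = 1 ∧ En lam f g = sInf (Vals lam) := by
  have hε := cauchyL2 hP hK hB hF
  have hq := cauchy_key lam hP hm hB hε hEn
  have hFB : ∀ x, F x ^ 2 ≤ B := fun x => le_of_tendsto ((hF x).pow 2) (Eventually.of_forall fun n => hB n x)
  obtain ⟨G, hG, hgG⟩ := complete (fun n => (hP n).mg)
    (squeeze_zero (fun p => S_nonneg _) (fun p => le_add_of_nonneg_right (S_nonneg _)) hq)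
  obtain ⟨F0, hF0, hfF0⟩ := complete (fun n => (hP n).mf) hε
  obtain ⟨F1, hF1, hfF1⟩ := complete (fun n => (hP n).mx)
    (squeeze_zero (fun p => S_nonneg _) (fun p => le_add_of_nonneg_left (S_nonneg _)) hq)
  have a0 := ae_eq_of_tendsto (fun n => (hP n).mf) hF0 hfF0 hF
  have a1 := ae_eq_of_tendsto (fun n => (hP n).mx) hF1 hfF1 (fun x => (hF x).const_mul x)
  have mF : MemLp F 2 := hF0.ae_eq a0
  have mxF : MemLp (fun x => x * F x) 2 := hF1.ae_eq a1
  have t0 : Tendsto (fun n => S (fun x => f n x - F x)) atTop (𝓝 0) := by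
    refine hfF0.congr fun n => S_congr ?_
    filter_upwards [a0] with x hx; rw [hx]
  have t1 : Tendsto (fun n => S (fun x => x * f n x - x * F x)) atTop (𝓝 0) := by
    refine hfF1.congr fun n => S_congr ?_
    filter_upwards [a1] with x hx; rw [hx]
  have hSF : S F = 1 := by
    have := tendsto_S (fun n => (hP n).mf) mF t0
    simp only [hm] at this
    exact tendsto_nhds_unique this tendsto_const_nhds
  have hPr : Pr F G := by
    refine ⟨fun x y => ?_, hG, mF, mxF⟩
    refine tendsto_nhds_unique ((hF y).sub (hF x)) ?_
    have : Tendsto (fun n => √(|y - x| * S (fun t => g n t - G t))) atTop (𝓝 0) := by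
      simpa using (hgG.const_mul |y - x|).sqrt
    rw [tendsto_iff_norm_sub_tendsto_zero]
    refine squeeze_zero (fun _ => norm_nonneg _) (fun n => ?_) this
    rw [(hP n).ftc, ← intervalIntegral.integral_sub (ii (hP n).mg _ _) (ii hG _ _)]
    exact Real.abs_le_sqrt (int_sq_le (memLp_sub (hP n).mg hG) x y)
  refine ⟨F, G, hPr, hSF, ?_⟩
  have tN : Tendsto (fun n => N (f n)) atTop (𝓝 (N F)) := by
    rw [tendsto_iff_norm_sub_tendsto_zero]
    refine squeeze_zero (fun _ => norm_nonneg _) (fun n => N_diff (hP n).mf mF (hB n) hFB) ?_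
    simp only [hm, hSF]
    simpa using ((t0.mul_const (2 * 1 + 2 * 1 : ℝ)).sqrt).const_mul (2 * B)
  have tE : Tendsto (fun n => En lam (f n) (g n)) atTop (𝓝 (En lam F G)) :=
    ((tendsto_S (fun n => (hP n).mg) hG hgG).add (tendsto_S (fun n => (hP n).mx) mxF t1)).add
      (tN.const_mul (lam / 2))
  exact tendsto_nhds_unique tE hEn

lemma exists_min (lam : ℝ) : ∃ f g, Pr f g ∧ S f = 1 ∧ En lam f g = sInf (Vals lam) := by
  set I := sInf (Vals lam) with hI
  -- minimizing sequence
  have hseq : ∀ n : ℕ, ∃ p : (ℝ → ℝ) × (ℝ → ℝ), Pr p.1 p.2 ∧ S p.1 = 1 ∧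
      En lam p.1 p.2 < I + 1 / ((n:ℝ) + 1) := by
    intro n
    obtain ⟨e, ⟨f, g, h, hm, rfl⟩, hlt⟩ := exists_lt_of_csInf_lt (vals_ne lam)
      (show sInf (Vals lam) < I + 1 / ((n:ℝ) + 1) by rw [← hI]; linarith [Nat.one_div_pos_of_nat (α := ℝ) (n := n)])
    exact ⟨(f, g), h, hm, hlt⟩
  choose p hp hm he using hseq
  obtain ⟨C, hC⟩ := coercive lam
  have hle : ∀ n, En lam (p n).1 (p n).2 ≤ I + 1 := by
    intro n
    have : 1 / ((n:ℝ) + 1) ≤ 1 := by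
      rw [div_le_one (by positivity)]; linarith [(Nat.cast_nonneg n : (0:ℝ) ≤ n)]
    linarith [he n]
  set K := 2 * (I + 1 + C) with hKd
  have hKg : ∀ n, S (p n).2 ≤ K := by
    intro n
    have := hC _ _ (hp n) (hm n)
    have := S_nonneg fun x => x * (p n).1 x
    linarith [hle n]
  have hKx : ∀ n, S (fun x => x * (p n).1 x) ≤ K := by
    intro n
    have := hC _ _ (hp n) (hm n)
    have := S_nonneg (p n).2
    have := S_nonneg fun x => x * (p n).1 x
    linarith [hle n]
  set B := 2 + 2 * K with hBd
  have hB : ∀ n x, (p n).1 x ^ 2 ≤ B := by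
    intro n x
    have := (hp n).sup one_pos x
    rw [hm n] at this
    linarith [hKg n]
  obtain ⟨φ, hφ, F, hF⟩ := extract hp hKg hB
  have hEn : Tendsto (fun n => En lam (p n).1 (p n).2) atTop (𝓝 I) := by
    refine tendsto_of_tendsto_of_tendsto_of_le_of_le tendsto_const_nhds
      (g := fun _ => I) (h := fun n : ℕ => I + 1 / ((n:ℝ) + 1)) ?_
      (fun n => inf_le lam (hp n) (hm n)) (fun n => (he n).le)
    simpa using tendsto_one_div_add_atTop_nhds_zero_nat.const_add I
  -- pass to the subsequence
  obtain ⟨f, hfd⟩ : ∃ f : ℕ → ℝ → ℝ, f = fun n => (p (φ n)).1 := ⟨_, rfl⟩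
  obtain ⟨g, hgd⟩ : ∃ g : ℕ → ℝ → ℝ, g = fun n => (p (φ n)).2 := ⟨_, rfl⟩
  have hP : ∀ n, Pr (f n) (g n) := fun n => by rw [hfd, hgd]; exact hp _
  replace hm : ∀ n, S (f n) = 1 := fun n => by rw [hfd]; exact hm _
  replace hKx : ∀ n, S (fun x => x * f n x) ≤ K := fun n => by rw [hfd]; exact hKx _
  replace hB : ∀ n x, f n x ^ 2 ≤ B := fun n x => by rw [hfd]; exact hB _ _
  replace hF : ∀ x, Tendsto (fun n => f n x) atTop (𝓝 (F x)) := fun x => by rw [hfd]; exact hF x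
  replace hEn : Tendsto (fun n => En lam (f n) (g n)) atTop (𝓝 I) := by
    rw [hfd, hgd]; exact hEn.comp hφ.tendsto_atTop
  clear hfd hgd hKg hle he hp hφ φ
  exact min_of_seq lam hP hm hKx hB hF hEn

end GS

namespace GS
open Filter Topology Set

lemma ia {u v : ℝ → ℝ} (hu : Integrable u) (hv : Integrable v) : Integrable (fun x => u x + v x) :=
  hu.add hv
lemma isb {u v : ℝ → ℝ} (hu : Integrable u) (hv : Integrable v) : Integrable (fun x => u x - v x) :=
  hu.sub hv

lemma poly_crit {a A Q b A' lam n c c2 c3 c4 I : ℝ}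
    (h : ∀ t : ℝ, I * (1 + 2 * t * a + t ^ 2 * A) ^ 2 ≤ (1 + 2 * t * a + t ^ 2 * A) * (Q + 2 * t * b + t ^ 2 * A')
      + lam / 2 * (n + 4 * t * c + 6 * t ^ 2 * c2 + 4 * t ^ 3 * c3 + t ^ 4 * c4))
    (h0 : Q + lam / 2 * n = I) : b = (2 * I - Q) * a - lam * c := by
  set P : ℝ → ℝ := fun t => (1 + 2 * t * a + t ^ 2 * A) * (Q + 2 * t * b + t ^ 2 * A')
      + lam / 2 * (n + 4 * t * c + 6 * t ^ 2 * c2 + 4 * t ^ 3 * c3 + t ^ 4 * c4)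
      - I * (1 + 2 * t * a + t ^ 2 * A) ^ 2 with hP
  have hmin : IsLocalMin P 0 := by
    refine Eventually.of_forall fun t => ?_
    have : P 0 = 0 := by simp only [hP]; rw [← h0]; ring
    rw [this]; simp only [hP]; linarith [h t]
  have d1 : HasDerivAt (fun t : ℝ => 1 + 2 * t * a + t ^ 2 * A) (2 * a) 0 := by
    have := ((((hasDerivAt_id (0:ℝ)).const_mul 2).mul_const a).const_add 1).add
      (((hasDerivAt_id (0:ℝ)).pow 2).mul_const A)
    exact this.congr_deriv (by simp)
  have d2 : HasDerivAt (fun t : ℝ => Q + 2 * t * b + t ^ 2 * A') (2 * b) 0 := by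
    have := ((((hasDerivAt_id (0:ℝ)).const_mul 2).mul_const b).const_add Q).add
      (((hasDerivAt_id (0:ℝ)).pow 2).mul_const A')
    exact this.congr_deriv (by simp)
  have d3 : HasDerivAt (fun t : ℝ => n + 4 * t * c + 6 * t ^ 2 * c2 + 4 * t ^ 3 * c3 + t ^ 4 * c4) (4 * c) 0 := by
    have := (((((((hasDerivAt_id (0:ℝ)).const_mul 4).mul_const c).const_add n).add
      ((((hasDerivAt_id (0:ℝ)).pow 2).const_mul 6).mul_const c2)).add
      ((((hasDerivAt_id (0:ℝ)).pow 3).const_mul 4).mul_const c3))).add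
      (((hasDerivAt_id (0:ℝ)).pow 4).mul_const c4)
    exact this.congr_deriv (by simp)
  have d := ((d1.mul d2).add (d3.const_mul (lam / 2))).sub ((d1.pow 2).const_mul I)
  have := hmin.hasDerivAt_eq_zero d
  norm_num at this
  linarith

lemma weakEL (lam : ℝ) {f g : ℝ → ℝ} (h : Pr f g) (hm : S f = 1) (hE : En lam f g = sInf (Vals lam)) :
    ∃ μ : ℝ, ∀ φ : ℝ → ℝ, ContDiff ℝ 1 φ → HasCompactSupport φ →
      ∫ x, g x * deriv φ x = ∫ x, ((μ - x ^ 2 - lam * f x ^ 2) * f x) * φ x := by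
  set I := sInf (Vals lam) with hI
  set Q := S g + S (fun x => x * f x) with hQ
  refine ⟨2 * I - Q, fun φ hφ hc => ?_⟩
  have hp := Pr.test hφ hc
  have cf := h.cont
  have cφ := hφ.continuous
  have i1 : Integrable (fun x => f x * φ x) := (cf.mul cφ).integrable_of_hasCompactSupport hc.mul_left
  have i2 : Integrable (fun x => (x * f x) * (x * φ x)) := int_mul h.mx hp.mx
  have j1 : Integrable (fun x => f x ^ 3 * φ x) :=
    ((cf.pow 3).mul cφ).integrable_of_hasCompactSupport hc.mul_left
  have j2 : Integrable (fun x => f x ^ 2 * φ x ^ 2) := by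
    have := ((cf.pow 2).mul (cφ.mul cφ)).integrable_of_hasCompactSupport (μ := volume) (hc.mul_left.mul_left)
    refine this.congr (ae_of_all _ fun x => ?_); simp only [Pi.mul_apply, Pi.pow_apply]; ring
  have j3 : Integrable (fun x => f x * φ x ^ 3) := by
    have := (cf.mul ((cφ.pow 2).mul cφ)).integrable_of_hasCompactSupport (μ := volume) (hc.mul_left.mul_left)
    refine this.congr (ae_of_all _ fun x => ?_); simp only [Pi.mul_apply, Pi.pow_apply]; ring
  have j4 : Integrable (fun x => φ x ^ 4) := hp.int4
  have key := poly_crit (a := ∫ x, f x * φ x) (A := S φ) (Q := Q)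
    (b := (∫ x, g x * deriv φ x) + ∫ x, (x * f x) * (x * φ x)) (A' := S (deriv φ) + S (fun x => x * φ x))
    (lam := lam) (n := N f) (c := ∫ x, f x ^ 3 * φ x) (c2 := ∫ x, f x ^ 2 * φ x ^ 2)
    (c3 := ∫ x, f x * φ x ^ 3) (c4 := N φ) (I := I) (by
      intro t
      have hs := scaled lam (h.lin hp 1 t)
      have e1 := S_lin h.mf hp.mf 1 t
      have e2 := S_lin h.mg hp.mg 1 t
      have e3 := S_lin h.mx hp.mx 1 t
      have e4 : (fun x => x * (1 * f x + t * φ x)) = fun x => 1 * (x * f x) + t * (x * φ x) := by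
        ext; ring
      have e5 : N (fun x => 1 * f x + t * φ x) = N f + 4 * t * (∫ x, f x ^ 3 * φ x)
          + 6 * t ^ 2 * (∫ x, f x ^ 2 * φ x ^ 2) + 4 * t ^ 3 * (∫ x, f x * φ x ^ 3) + t ^ 4 * N φ := by
        unfold N
        have : ∀ x, (1 * f x + t * φ x) ^ 4 = f x ^ 4 + 4 * t * (f x ^ 3 * φ x)
          + 6 * t ^ 2 * (f x ^ 2 * φ x ^ 2) + 4 * t ^ 3 * (f x * φ x ^ 3) + t ^ 4 * φ x ^ 4 := fun x => by ring
        simp_rw [this]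
        have k0 := h.int4
        have k1 := j1.const_mul (4 * t)
        have k2 := j2.const_mul (6 * t ^ 2)
        have k3 := j3.const_mul (4 * t ^ 3)
        have k4 := j4.const_mul (t ^ 4)
        rw [integral_add (ia (ia (ia k0 k1) k2) k3) k4, integral_add (ia (ia k0 k1) k2) k3,
          integral_add (ia k0 k1) k2, integral_add k0 k1]
        simp only [integral_const_mul]
      rw [e4, e1, e2, e3, e5, hm] at hs
      rw [← hI] at hs
      refine (le_of_eq ?_).trans (hs.trans (le_of_eq ?_))
      · ring
      · rw [hQ]; ring) hE
  have e : ∀ x, ((2 * I - Q - x ^ 2 - lam * f x ^ 2) * f x) * φ x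
      = (2 * I - Q) * (f x * φ x) - (x * f x) * (x * φ x) - lam * (f x ^ 3 * φ x) := fun x => by ring
  simp_rw [e]
  rw [integral_sub (isb (i1.const_mul _) i2) (j1.const_mul _), integral_sub (i1.const_mul _) i2,
    integral_const_mul, integral_const_mul]
  linarith

lemma dubois {G : ℝ → ℝ} (hG : LocallyIntegrable G)
    (h : ∀ φ : ℝ → ℝ, ContDiff ℝ 1 φ → HasCompactSupport φ → ∫ x, G x * deriv φ x = 0) :
    ∃ c, ∀ᵐ x, G x = c := by
  let b : ContDiffBump (0:ℝ) := ⟨1, 2, by norm_num, by norm_num⟩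
  set ρ := b.normed volume with hρ
  have hρ1 : ∫ x, ρ x = 1 := b.integral_normed
  have hρc : HasCompactSupport ρ := b.hasCompactSupport_normed
  have hρs : Continuous ρ := b.continuous_normed
  set c := ∫ x, G x * ρ x with hc
  refine ⟨c, ?_⟩
  have iG : ∀ γ : ℝ → ℝ, Continuous γ → HasCompactSupport γ → Integrable (fun x => G x * γ x) := by
    intro γ h1 h2
    have := hG.integrable_smul_left_of_hasCompactSupport h1 h2
    refine this.congr (ae_of_all _ fun x => ?_); simp [mul_comm]
  have key : ∀ᵐ x, G x - c = 0 := by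
    refine ae_eq_zero_of_integral_contDiff_smul_eq_zero (hG.sub (locallyIntegrable_const c)) ?_
    intro γ hγ hγc
    have cγ := hγ.continuous
    set m := ∫ x, γ x with hmd
    set η := fun x => γ x - m * ρ x with hη
    have cη : Continuous η := cγ.sub (continuous_const.mul hρs)
    have sη : HasCompactSupport η := hγc.sub hρc.mul_left
    have iγ : Integrable γ := cγ.integrable_of_hasCompactSupport hγc
    have iρ : Integrable ρ := hρs.integrable_of_hasCompactSupport hρc
    have η0 : ∫ x, η x = 0 := by
      simp only [hη]; rw [integral_sub iγ (iρ.const_mul m), integral_const_mul, hρ1]; simp [hmd]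
    obtain ⟨R0, hR0⟩ := sη.isCompact.isBounded.subset_closedBall 0
    set R := |R0| + 1 with hR
    have hR0' := le_abs_self R0
    have hsup : ∀ t, R ≤ |t| → η t = 0 := by
      intro t ht
      by_contra hne
      have := hR0 (subset_tsupport _ hne)
      rw [Metric.mem_closedBall, Real.dist_eq, sub_zero] at this
      linarith
    have hRpos : 0 < R := by positivity
    set φ := fun x => ∫ t in (-R)..x, η t with hφ
    have dφ : ∀ x, HasDerivAt φ (η x) x := fun x =>
      intervalIntegral.integral_hasDerivAt_right (cη.intervalIntegrable _ _)
        cη.aestronglyMeasurable.stronglyMeasurableAtFilter cη.continuousAt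
    have ddφ : deriv φ = η := funext fun x => (dφ x).deriv
    have hφ1 : ContDiff ℝ 1 φ := by
      rw [contDiff_one_iff_deriv]
      exact ⟨fun x => (dφ x).differentiableAt, by rw [ddφ]; exact cη⟩
    have hφc : HasCompactSupport φ := by
      refine HasCompactSupport.intro (isCompact_Icc (a := -R) (b := R)) fun x hx => ?_
      simp only [mem_Icc, not_and_or, not_le] at hx
      rcases hx with hx | hx
      · refine intervalIntegral.integral_zero_ae (ae_of_all _ fun t ht => hsup t ?_)
        rw [uIoc_of_ge hx.le] at ht
        rw [abs_of_neg (by linarith [ht.2])]; linarith [ht.2]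
      · simp only [hφ]
        rw [intervalIntegral.integral_eq_integral_of_support_subset, η0]
        intro t ht
        have : |t| < R := by
          by_contra! hcon
          exact ht (hsup t hcon)
        rw [abs_lt] at this
        exact ⟨this.1, by linarith [this.2]⟩
    have h1 := h φ hφ1 hφc
    rw [ddφ] at h1
    have e1 : ∫ x, G x * η x = (∫ x, G x * γ x) - m * c := by
      have : ∀ x, G x * η x = G x * γ x - m * (G x * ρ x) := fun x => by simp only [hη]; ring
      simp_rw [this]
      rw [integral_sub (iG γ cγ hγc) ((iG ρ hρs hρc).const_mul m), integral_const_mul]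
    have e2 : ∫ x, γ x • (G x - c) = (∫ x, G x * γ x) - c * m := by
      have : ∀ x, γ x • (G x - c) = G x * γ x - c * γ x := fun x => by simp; ring
      simp_rw [this]
      rw [integral_sub (iG γ cγ hγc) (iγ.const_mul c), integral_const_mul]
    change ∫ x, γ x • (G x - c) = 0
    rw [e2]; linarith
  filter_upwards [key] with x hx; linarith

lemma primd {k : ℝ → ℝ} (hk : Continuous k) (x : ℝ) : HasDerivAt (fun y => ∫ t in (0:ℝ)..y, k t) (k x) x :=
  intervalIntegral.integral_hasDerivAt_right (hk.intervalIntegrable _ _)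
        hk.aestronglyMeasurable.stronglyMeasurableAtFilter hk.continuousAt

lemma EL (lam : ℝ) {f g : ℝ → ℝ} (h : Pr f g) (hm : S f = 1) (hE : En lam f g = sInf (Vals lam)) :
    ∃ f' : ℝ → ℝ, ∃ μ : ℝ, (∀ x, HasDerivAt f (f' x) x) ∧
      (∀ x, HasDerivAt f' ((x ^ 2 + lam * f x ^ 2 - μ) * f x) x) ∧ Pr f f' ∧
      En lam f f' = sInf (Vals lam) := by
  obtain ⟨μ, hμ⟩ := weakEL lam h hm hE
  have cf := h.cont
  set k := fun x => (μ - x ^ 2 - lam * f x ^ 2) * f x with hk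
  have ck : Continuous k := by fun_prop
  set K := fun y => ∫ t in (0:ℝ)..y, k t with hKd
  have dK : ∀ x, HasDerivAt K (k x) x := primd ck
  have cK : Continuous K := continuous_iff_continuousAt.2 fun x => (dK x).continuousAt
  have lg : LocallyIntegrable g := h.mg.locallyIntegrable (by norm_num)
  obtain ⟨c, hc⟩ := dubois (G := fun x => g x + K x) (lg.add cK.locallyIntegrable) (by
    intro φ hφ hcφ
    have cφ' : Continuous (deriv φ) := hφ.continuous_deriv (by norm_num)
    have iK : Integrable (fun x => K x * deriv φ x) := (cK.mul cφ').integrable_of_hasCompactSupport hcφ.deriv.mul_left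
    have h1 := integral_mul_deriv_eq_deriv_mul_of_integrable (u := K) (v := φ) (u' := k) (v' := deriv φ)
      (fun x _ => dK x) (fun x _ => (hφ.differentiable (by norm_num) x).hasDerivAt)
      iK
      ((ck.mul hφ.continuous).integrable_of_hasCompactSupport hcφ.mul_left)
      ((cK.mul hφ.continuous).integrable_of_hasCompactSupport hcφ.mul_left)
    have h2 := hμ φ hφ hcφ
    simp_rw [add_mul]
    rw [integral_add (int_mul h.mg (Pr.test hφ hcφ).mg) iK, h1, h2]
    simp [hk])
  have hg : g =ᵐ[volume] fun x => c - K x := by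
    filter_upwards [hc] with x hx; linarith
  have hftc : ∀ x y, f y - f x = ∫ t in x..y, (c - K t) := by
    intro x y
    rw [h.ftc]
    apply intervalIntegral.integral_congr_ae
    filter_upwards [hg] with t ht _ using ht
  refine ⟨fun x => c - K x, μ, fun x => ?_, fun x => ?_, ⟨hftc, h.mg.ae_eq hg, h.mf, h.mx⟩, ?_⟩
  · have := (primd (k := fun x => c - K x) (continuous_const.sub cK) x).const_add (f 0)
    have e : (fun y => f 0 + ∫ t in (0:ℝ)..y, (c - K t)) = f := by
      ext y; rw [← hftc]; ring
    rwa [e] at this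
  · have := (dK x).const_sub c
    exact this.congr_deriv (by simp only [hk]; ring)
  · rw [← hE]; unfold En; rw [S_congr hg]

end GS

namespace GS
open Filter Topology Set

lemma right_deriv_norm {ψ : ℝ → ℂ} (hψ : Differentiable ℝ ψ) (x : ℝ) :
    ∃ d : ℝ, HasDerivWithinAt (fun y => ‖ψ y‖) d (Ioi x) x ∧ |d| ≤ ‖deriv ψ x‖ := by
  have hs : Tendsto (slope ψ x) (𝓝[>] x) (𝓝 (deriv ψ x)) := by
    have := hasDerivWithinAt_iff_tendsto_slope.1 ((hψ x).hasDerivAt.hasDerivWithinAt (s := Ioi x))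
    simpa using this
  have hex : ∃ d : ℝ, HasDerivWithinAt (fun y => ‖ψ y‖) d (Ioi x) x := by
    by_cases h0 : ψ x = 0
    · refine ⟨‖deriv ψ x‖, ?_⟩
      rw [hasDerivWithinAt_iff_tendsto_slope]
      simp only [sdiff_singleton_eq_self, mem_Ioi, lt_irrefl, not_false_eq_true]
      refine hs.norm.congr' ?_
      filter_upwards [self_mem_nhdsWithin] with y hy
      have hy' : 0 < y - x := sub_pos.2 hy
      simp only [slope_def_module, h0, norm_zero, sub_zero, norm_smul, norm_inv,
        Real.norm_of_nonneg hy'.le, smul_eq_mul]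
    · exact ⟨_, ((hψ x).norm ℝ h0).hasDerivAt.hasDerivWithinAt⟩
  obtain ⟨d, hd⟩ := hex
  refine ⟨d, hd, ?_⟩
  rw [hasDerivWithinAt_iff_tendsto_slope] at hd
  simp only [sdiff_singleton_eq_self, mem_Ioi, lt_irrefl, not_false_eq_true] at hd
  refine le_of_tendsto_of_tendsto hd.abs hs.norm ?_
  filter_upwards [self_mem_nhdsWithin] with y hy
  have hy' : 0 < y - x := sub_pos.2 hy
  rw [slope_def_field, slope_def_module, norm_smul, abs_div, norm_inv, Real.norm_of_nonneg hy'.le,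
    abs_of_pos hy', div_eq_inv_mul]
  exact mul_le_mul_of_nonneg_left (abs_norm_sub_norm_le _ _) (by positivity)

lemma absPr {ψ : ℝ → ℂ} (hψ : Differentiable ℝ ψ)
    (h1 : Integrable (fun ξ : ℝ => ‖ψ ξ‖ ^ 2)) (h2 : Integrable (fun ξ : ℝ => ‖deriv ψ ξ‖ ^ 2))
    (h3 : Integrable (fun ξ : ℝ => ξ ^ 2 * ‖ψ ξ‖ ^ 2)) :
    ∃ g, Pr (fun x => ‖ψ x‖) g ∧ ∀ x, |g x| ≤ ‖deriv ψ x‖ := by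
  choose d hd hb using right_deriv_norm hψ
  have cn : Continuous fun x => ‖ψ x‖ := hψ.continuous.norm
  have md : Measurable d := by
    have := measurable_derivWithin_Ioi (fun y => ‖ψ y‖)
    convert this using 2 with x
    exact ((hd x).derivWithin (uniqueDiffWithinAt_Ioi x)).symm
  have m2 : MemLp (fun x => ‖deriv ψ x‖) 2 :=
    (memLp_two_iff_integrable_sq (measurable_deriv ψ).norm.aestronglyMeasurable).2 h2
  have mg : MemLp d 2 := m2.mono md.aestronglyMeasurable (ae_of_all _ fun x => by simpa using hb x)
  refine ⟨d, ⟨fun x y => ?_, mg, ?_, ?_⟩, hb⟩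
  · exact (intervalIntegral.integral_eq_sub_of_hasDeriv_right cn.continuousOn
      (fun t _ => hd t) (ii mg x y)).symm
  · exact (memLp_two_iff_integrable_sq cn.aestronglyMeasurable).2 h1
  · refine (memLp_two_iff_integrable_sq (continuous_id.mul cn).aestronglyMeasurable).2 ?_
    refine h3.congr (ae_of_all _ fun x => ?_)
    simp [mul_pow]

lemma S_le {u v : ℝ → ℝ} (hu : MemLp u 2) (hv : MemLp v 2) (h : ∀ x, |u x| ≤ |v x|) : S u ≤ S v :=
  integral_mono hu.integrable_sq hv.integrable_sq fun x => sq_le_sq.2 (h x)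

lemma realPr {f f' : ℝ → ℝ} (h : Pr f f') (hd : ∀ x, HasDerivAt f (f' x) x) :
    ∃ g, Pr (fun x => |f x|) g ∧ ∀ x, |g x| ≤ |f' x| := by
  have hd' : ∀ x, HasDerivAt (fun x => (f x : ℂ)) (f' x : ℂ) x := fun x => (hd x).ofReal_comp
  have he : deriv (fun x => (f x : ℂ)) = fun x => (f' x : ℂ) := funext fun x => (hd' x).deriv
  obtain ⟨g, hg, hb⟩ := absPr (ψ := fun x => (f x : ℂ)) (fun x => (hd' x).differentiableAt)
    (by simpa using h.mf.integrable_sq) (by rw [he]; simpa using h.mg.integrable_sq)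
    (by simpa [mul_pow] using h.mx.integrable_sq)
  rw [he] at hb
  exact ⟨g, by simpa using hg, by simpa using hb⟩

lemma ode_zero {u u' q : ℝ → ℝ} (hq : Continuous q) (h1 : ∀ x, HasDerivAt u (u' x) x)
    (h2 : ∀ x, HasDerivAt u' (q x * u x) x) {x0 : ℝ} (h0 : u x0 = 0) (h0' : u' x0 = 0) (x : ℝ) :
    u x = 0 := by
  set R := max |x| |x0| + 1 with hR
  have hx : x ∈ Ioo (-R) R := abs_lt.1 (by rw [hR]; linarith [le_max_left |x| |x0|])
  have hx0 : x0 ∈ Ioo (-R) R := abs_lt.1 (by rw [hR]; linarith [le_max_right |x| |x0|])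
  obtain ⟨C, hC⟩ := (isCompact_Icc (a := -R) (b := R)).exists_bound_of_continuousOn hq.continuousOn
  set v : ℝ → ℝ × ℝ → ℝ × ℝ := fun t y => (y.2, q t * y.1) with hv
  have := ODE_solution_unique_of_mem_Ioo (v := v) (s := fun _ => univ) (K := Real.toNNReal (max 1 C))
    (f := fun t => (u t, u' t)) (g := fun _ => (0, 0)) (a := -R) (b := R) (t₀ := x0) (by
      intro t ht
      apply LipschitzWith.lipschitzOnWith
      apply LipschitzWith.of_dist_le_mul
      intro y z
      have hm : (0:ℝ) ≤ max 1 C := le_trans zero_le_one (le_max_left _ _)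
      rw [Real.coe_toNNReal _ hm, Prod.dist_eq, Prod.dist_eq]
      have ha : dist y.1 z.1 ≤ max (dist y.1 z.1) (dist y.2 z.2) := le_max_left _ _
      have hb : dist y.2 z.2 ≤ max (dist y.1 z.1) (dist y.2 z.2) := le_max_right _ _
      have hD : 0 ≤ max (dist y.1 z.1) (dist y.2 z.2) := le_trans dist_nonneg ha
      apply max_le
      · simp only [hv]
        calc dist y.2 z.2 ≤ 1 * max (dist y.1 z.1) (dist y.2 z.2) := by linarith
          _ ≤ _ := mul_le_mul_of_nonneg_right (le_max_left _ _) hD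
      · simp only [hv]
        rw [Real.dist_eq, ← mul_sub, abs_mul, ← Real.dist_eq]
        have := hC t ⟨ht.1.le, ht.2.le⟩
        rw [Real.norm_eq_abs] at this
        exact mul_le_mul (this.trans (le_max_right _ _)) ha dist_nonneg hm) hx0
    (fun t _ => ⟨(h1 t).prodMk (h2 t), trivial⟩)
    (fun t _ => ⟨(hasDerivAt_const t ((0:ℝ), (0:ℝ))).congr_deriv (by simp only [hv, mul_zero]; rfl), trivial⟩)
    (by simp [h0, h0'])
  have := this hx
  simpa using congrArg Prod.fst this

lemma exists_pos_min (lam : ℝ) : ∃ u u' : ℝ → ℝ, Pr u u' ∧ (∀ x, HasDerivAt u (u' x) x) ∧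
    (∀ x, 0 < u x) ∧ S u = 1 ∧ En lam u u' = sInf (Vals lam) := by
  obtain ⟨f, g, h, hm, hE⟩ := exists_min lam
  obtain ⟨f', μ, hd, -, hP, hE'⟩ := EL lam h hm hE
  obtain ⟨g1, hP1, hb⟩ := realPr hP hd
  have hm1 : S (fun x => |f x|) = 1 := by rw [← hm]; simp [S]
  have hE1 : En lam (fun x => |f x|) g1 = sInf (Vals lam) := by
    apply le_antisymm _ (inf_le lam hP1 hm1)
    rw [← hE']
    unfold En
    have e1 : S (fun x => x * |f x|) = S (fun x => x * f x) := by simp [S, mul_pow]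
    have e2 : N (fun x => |f x|) = N f := by simp [N, Even.pow_abs (show Even 4 by decide)]
    rw [e1, e2]
    linarith [S_le hP1.mg hP.mg hb]
  obtain ⟨u', μ', hd1, hd2, hP2, hE2⟩ := EL lam hP1 hm1 hE1
  refine ⟨_, u', hP2, hd1, ?_, hm1, hE2⟩
  intro x
  rcases (abs_nonneg (f x)).eq_or_lt with h0 | h0
  · exfalso
    have hmin : IsLocalMin (fun x => |f x|) x := Eventually.of_forall fun y => by
      simp only; rw [← h0]; exact abs_nonneg _
    have hz := hmin.hasDerivAt_eq_zero (hd1 x)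
    have hc := hP2.cont
    have := ode_zero (q := fun x => x ^ 2 + lam * |f x| ^ 2 - μ') (by fun_prop) hd1 hd2 h0.symm hz
    have : S (fun x => |f x|) = 0 := by
      unfold S; simp only [this]; simp
    linarith
  · exact h0

lemma Pr.refl {f g : ℝ → ℝ} (h : Pr f g) (a : ℝ) : Pr (fun x => f (a - x)) (fun x => - g (a - x)) := by
  have mp := Measure.measurePreserving_sub_left volume a
  have mf : MemLp (fun x => f (a - x)) 2 := h.mf.comp_measurePreserving mp
  refine ⟨fun x y => ?_, (h.mg.comp_measurePreserving mp).neg, mf, ?_⟩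
  · rw [intervalIntegral.integral_neg, intervalIntegral.integral_comp_sub_left, ← h.ftc]; ring
  · have := memLp_lin mf (h.mx.comp_measurePreserving mp) a (-1)
    convert this using 2
    simp only [Function.comp]; ring

lemma S_refl (u : ℝ → ℝ) (a : ℝ) : S (fun x => u (a - x)) = S u :=
  integral_sub_left_eq_self (fun x => u x ^ 2) volume a
lemma N_refl (u : ℝ → ℝ) (a : ℝ) : N (fun x => u (a - x)) = N u :=
  integral_sub_left_eq_self (fun x => u x ^ 4) volume a
lemma S_neg (u : ℝ → ℝ) : S (fun x => - u x) = S u := by simp [S]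

lemma int_sym {G : ℝ → ℝ} (hG : Integrable G) (a : ℝ) :
    Integrable (fun x => G x + G (a - x)) ∧ ∫ x, (G x + G (a - x)) = 2 * ∫ x, G x := by
  have h2 : Integrable (fun x => G (a - x)) := hG.comp_sub_left a
  refine ⟨hG.add h2, ?_⟩
  rw [integral_add hG h2, integral_sub_left_eq_self G volume a]; ring

/-- gluing with a sign flip at a zero -/
lemma Pr.flip {f g : ℝ → ℝ} (h : Pr f g) {c : ℝ} (hc : f c = 0) :
    Pr (fun x => (if x < c then 1 else -1) * f x) (fun x => (if x < c then 1 else -1) * g x) := by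
  have mη : Measurable (fun x : ℝ => if x < c then (1:ℝ) else -1) :=
    Measurable.ite measurableSet_Iio measurable_const measurable_const
  have fl : ∀ {v : ℝ → ℝ}, MemLp v 2 → MemLp (fun x => (if x < c then (1:ℝ) else -1) * v x) 2 := by
    intro v hv
    refine hv.mono (mη.aestronglyMeasurable.mul hv.1) (ae_of_all _ fun x => ?_)
    split_ifs <;> simp
  have base : ∀ x, (if x < c then (1:ℝ) else -1) * f x = ∫ t in c..x, (if t < c then (1:ℝ) else -1) * g t := by
    intro x
    have hx : f x = ∫ t in c..x, g t := by rw [← h.ftc, hc, sub_zero]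
    rw [hx, ← intervalIntegral.integral_const_mul]
    apply intervalIntegral.integral_congr_ae
    have : ∀ᵐ t : ℝ, t ≠ c := by simp [ae_iff]
    filter_upwards [this] with t ht htx
    congr 1
    rcases lt_or_ge x c with hxc | hxc
    · rw [uIoc_of_ge hxc.le] at htx
      rw [if_pos hxc, if_pos (lt_of_le_of_ne htx.2 ht)]
    · rw [uIoc_of_le hxc] at htx
      rw [if_neg (not_lt.2 hxc), if_neg (not_lt.2 htx.1.le)]
  refine ⟨fun x y => ?_, fl h.mg, fl h.mf, ?_⟩
  · rw [base, base]
    exact intervalIntegral.integral_interval_sub_left (ii (fl h.mg) _ _) (ii (fl h.mg) _ _)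
  · have := fl h.mx
    have e : (fun x => x * ((if x < c then (1:ℝ) else -1) * f x))
        = fun x => (if x < c then (1:ℝ) else -1) * (x * f x) := by ext; ring
    rw [e]; exact this

lemma polar (lam : ℝ) {u u' : ℝ → ℝ} (hP : Pr u u') (hd : ∀ x, HasDerivAt u (u' x) x)
    (hpos : ∀ x, 0 < u x) (hm : S u = 1) (hE : En lam u u' = sInf (Vals lam))
    {h : ℝ} (hh : 0 < h) {x0 : ℝ} (hx0 : x0 < h) : u (2 * h - x0) ≤ u x0 := by
  by_contra! hbad
  set σ := fun x => 2 * h - x with hσ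
  have hPv := hP.refl (2 * h)
  have hdv : ∀ x, HasDerivAt (fun x => u (2 * h - x)) (-u' (2 * h - x)) x := fun x => by
    have := (hd (2 * h - x)).comp x ((hasDerivAt_id x).const_sub (2 * h))
    exact this.congr_deriv (by simp)
  have hPe := hP.lin hPv (1/2) (1/2)
  have hPd := hP.lin hPv (1/2) (-1/2)
  have hdd : ∀ x, HasDerivAt (fun x => 1/2 * u x + -1/2 * u (2 * h - x))
      (1/2 * u' x + -1/2 * -u' (2 * h - x)) x := fun x =>
    ((hd x).const_mul _).add ((hdv x).const_mul _)
  obtain ⟨gd, hPa, hgd⟩ := realPr hPd hdd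
  set e := fun x => 1/2 * u x + 1/2 * u (2 * h - x) with he
  set d := fun x => 1/2 * u x + -1/2 * u (2 * h - x) with hdef
  have hPs := hPa.flip (c := h) (by simp only [hdef, two_mul, add_sub_cancel_right]; ring_nf; simp)
  set s := fun x => (if x < h then (1:ℝ) else -1) * |d x| with hs
  set gs := fun x => (if x < h then (1:ℝ) else -1) * gd x with hgs
  set e' := fun x => 1/2 * u' x + 1/2 * -u' (2 * h - x) with he'
  have eσ : ∀ x, e (2 * h - x) = e x := fun x => by simp only [he, sub_sub_cancel]; ring
  have dσ : ∀ x, d (2 * h - x) = - d x := fun x => by simp only [hdef, sub_sub_cancel]; ring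
  have sσ : ∀ x, s (2 * h - x) = - s x := fun x => by
    simp only [hs, dσ, abs_neg]
    rcases lt_trichotomy x h with hx | hx | hx
    · rw [if_neg (by linarith), if_pos hx]; ring
    · have : d x = 0 := by
        have := dσ x
        rw [hx, show 2 * h - h = h by ring] at this
        rw [hx]; linarith
      rw [this]; simp
    · rw [if_pos (by linarith), if_neg (by linarith)]; ring
  have s2 : ∀ x, s x ^ 2 = d x ^ 2 := fun x => by
    simp only [hs]; split_ifs <;> simp
  have hu : ∀ x, u x = e x + d x := fun x => by simp only [he, hdef]; ring
  have huσ : ∀ x, u (2 * h - x) = e x - d x := fun x => by simp only [he, hdef]; ring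
  -- the polarized function with two candidate derivatives
  obtain ⟨w, hw⟩ : ∃ w : ℝ → ℝ, w = fun x => e x + s x := ⟨_, rfl⟩
  have hwσ : ∀ x, w (2 * h - x) = e x - s x := fun x => by rw [hw]; simp only [eσ, sσ]; ring
  have hPw1 : Pr w (fun x => 1 * e' x + 1 * gs x) := by
    have := hPe.lin hPs 1 1
    convert this using 2 with x
    rw [hw]; simp only; ring
  have hPw2 : Pr w (fun x => -(1 * e' (2 * h - x) + (-1) * gs (2 * h - x))) := by
    have := (hPe.lin hPs 1 (-1)).refl (2 * h)
    convert this using 2 with x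
    have e1 := eσ x
    have e2 := sσ x
    rw [hw]; simp only
    change e x + s x = 1 * e (2 * h - x) + -1 * s (2 * h - x)
    rw [e1, e2]; ring
  have hSw : S w = S u := by
    have a1 := (int_sym hPw1.mf.integrable_sq (2 * h)).2
    have a2 := (int_sym hP.mf.integrable_sq (2 * h)).2
    have : ∀ x, w x ^ 2 + w (2 * h - x) ^ 2 = u x ^ 2 + u (2 * h - x) ^ 2 := fun x => by
      rw [hwσ, huσ, hu, hw]; simp only; linear_combination 2 * s2 x
    simp only [this] at a1
    unfold S; linarith
  have hNw : N w = N u := by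
    have a1 := (int_sym hPw1.int4 (2 * h)).2
    have a2 := (int_sym hP.int4 (2 * h)).2
    have : ∀ x, w x ^ 4 + w (2 * h - x) ^ 4 = u x ^ 4 + u (2 * h - x) ^ 4 := fun x => by
      rw [hwσ, huσ, hu, hw]; simp only
      linear_combination (12 * e x ^ 2 + 2 * s x ^ 2 + 2 * d x ^ 2) * s2 x
    simp only [this] at a1
    unfold N; linarith
  have hD : ∀ {g}, Pr w g → S u' < S g := by
    intro g hg
    have hi := inf_le lam hg (hSw.trans hm)
    rw [← hE] at hi
    unfold En at hi
    rw [hNw] at hi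
    have key : S (fun x => x * w x) < S (fun x => x * u x) := by
      have a1 := int_sym hPw1.mx.integrable_sq (2 * h)
      have a2 := int_sym hP.mx.integrable_sq (2 * h)
      have hdiff : ∀ x, ((x * u x) ^ 2 + ((2 * h - x) * u (2 * h - x)) ^ 2)
          - ((x * w x) ^ 2 + ((2 * h - x) * w (2 * h - x)) ^ 2)
          = 2 * e x * (d x - s x) * (4 * h * (x - h)) := fun x => by
        rw [hwσ, huσ, hu, hw]; simp only
        linear_combination (-(x ^ 2) - (2 * h - x) ^ 2) * s2 x
      have hDint := a2.1.sub a1.1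
      have hval := integral_sub a2.1 a1.1
      have hfe : (fun x => 2 * e x * (d x - s x) * (4 * h * (x - h))) = fun x =>
          ((x * u x) ^ 2 + ((2 * h - x) * u (2 * h - x)) ^ 2)
          - ((x * w x) ^ 2 + ((2 * h - x) * w (2 * h - x)) ^ 2) := funext fun x => (hdiff x).symm
      have hepos : ∀ x, 0 < e x := fun x => by
        have i1 := hpos x
        have i2 := hpos (2 * h - x)
        simp only [he]; linarith
      have hnn : ∀ x, 0 ≤ 2 * e x * (d x - s x) * (4 * h * (x - h)) := fun x => by
        have i1 := hepos x
        have i2 := le_abs_self (d x)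
        have i3 := neg_abs_le (d x)
        rcases lt_or_ge x h with hx | hx
        · have : s x = |d x| := by simp only [hs]; rw [if_pos hx, one_mul]
          rw [this]
          have j1 : 0 ≤ |d x| - d x := by linarith
          have j2 : 0 ≤ h - x := by linarith
          have : 0 ≤ 2 * e x * (|d x| - d x) * (4 * h * (h - x)) := by positivity
          linarith
        · have : s x = -|d x| := by simp only [hs]; rw [if_neg (not_lt.2 hx)]; ring
          rw [this]
          have j1 : 0 ≤ d x - -|d x| := by linarith
          have j2 : 0 ≤ x - h := by linarith
          positivity
      have hne : 2 * e x0 * (d x0 - s x0) * (4 * h * (x0 - h)) ≠ 0 := by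
        have i1 := hepos x0
        have i2 : d x0 < 0 := by simp only [hdef]; linarith
        have i3 : s x0 = - d x0 := by
          simp only [hs]; rw [if_pos hx0, one_mul]; exact abs_of_neg i2
        rw [i3]
        have k1 : e x0 ≠ 0 := i1.ne'
        have k2 : d x0 - - d x0 ≠ 0 := by linarith
        have k3 : x0 - h ≠ 0 := by linarith
        have k4 : h ≠ 0 := hh.ne'
        simp [k1, k3, k4]
        linarith
      have ce : Continuous e := hPe.cont
      have cd : Continuous d := hPd.cont
      have cs : Continuous s := hPs.cont
      have cD : Continuous (fun x => 2 * e x * (d x - s x) * (4 * h * (x - h))) := by fun_prop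
      have hpI : 0 < ∫ x, 2 * e x * (d x - s x) * (4 * h * (x - h)) := by
        rw [integral_pos_iff_support_of_nonneg hnn (by rw [hfe]; exact hDint)]
        exact (cD.isOpen_support).measure_pos volume ⟨x0, hne⟩
      rw [hfe, hval, a1.2, a2.2] at hpI
      unfold S; linarith
    linarith
  have b1 := hD hPw1
  have b2 := hD hPw2
  rw [S_neg, S_refl (fun x => 1 * e' x + (-1) * gs x)] at b2
  rw [S_lin hPe.mg hPs.mg] at b1 b2
  have hgs : S gs ≤ S (fun x => 1/2 * u' x + -1/2 * -u' (2 * h - x)) := by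
    refine S_le hPs.mg hPd.mg fun x => ?_
    refine le_trans (le_of_eq ?_) (hgd x)
    simp only [hgs]; split_ifs <;> simp
  rw [S_lin hP.mg hPv.mg] at hgs
  have he2 : S e' = _ := S_lin hP.mg hPv.mg (1/2) (1/2)
  have hv2 : S (fun x => -u' (2 * h - x)) = S u' := by rw [S_neg, S_refl u']
  rw [hv2] at hgs he2
  linarith

end GS

namespace GS
open Filter Topology Set

lemma even_le {u : ℝ → ℝ} (hc : Continuous u)
    (hp : ∀ {h : ℝ}, 0 < h → ∀ {x : ℝ}, x < h → u (2 * h - x) ≤ u x) {x : ℝ} (hx : x ≤ 0) :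
    u (-x) ≤ u x := by
  have ht : Tendsto (fun h : ℝ => u (2 * h - x)) (𝓝[>] 0) (𝓝 (u (-x))) := by
    have : Continuous fun h : ℝ => u (2 * h - x) := by fun_prop
    have := this.tendsto 0
    simp only [mul_zero, zero_sub] at this
    exact this.mono_left nhdsWithin_le_nhds
  refine le_of_tendsto ht ?_
  filter_upwards [self_mem_nhdsWithin] with h hh
  exact hp hh (lt_of_le_of_lt hx hh)

lemma final (lam : ℝ) : ∃ u u' : ℝ → ℝ, Pr u u' ∧ (∀ x, HasDerivAt u (u' x) x) ∧
    (∀ x, 0 < u x) ∧ S u = 1 ∧ En lam u u' = sInf (Vals lam) ∧ (∀ x, u (-x) = u x) ∧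
    AntitoneOn u (Ici 0) := by
  obtain ⟨u, u', hP, hd, hpos, hm, hE⟩ := exists_pos_min lam
  have p1 : ∀ {h : ℝ}, 0 < h → ∀ {x : ℝ}, x < h → u (2 * h - x) ≤ u x :=
    fun hh _ hx => polar lam hP hd hpos hm hE hh hx
  have hPv := hP.refl 0
  have hdv : ∀ x, HasDerivAt (fun x => u (0 - x)) (-u' (0 - x)) x := fun x => by
    have := (hd (0 - x)).comp x ((hasDerivAt_id x).const_sub 0)
    exact this.congr_deriv (by simp)
  have hEv : En lam (fun x => u (0 - x)) (fun x => -u' (0 - x)) = sInf (Vals lam) := by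
    rw [← hE]
    unfold En
    have e1 : S (fun x => x * u (0 - x)) = S (fun x => x * u x) := by
      rw [← S_refl (fun x => x * u x) 0, ← S_neg]
      congr 1; ext x; ring
    rw [S_neg, S_refl u', N_refl u, e1]
  have p2 : ∀ {h : ℝ}, 0 < h → ∀ {x : ℝ}, x < h → u (0 - (2 * h - x)) ≤ u (0 - x) :=
    fun hh _ hx => polar lam hPv hdv (fun x => hpos _) ((S_refl u 0).trans hm) hEv hh hx
  have ev0 : ∀ x, x ≤ 0 → u (-x) = u x := fun x hx => by
    apply le_antisymm (even_le hP.cont p1 hx)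
    have := even_le (u := fun x => u (0 - x)) hPv.cont p2 hx
    simpa using this
  have ev : ∀ x, u (-x) = u x := fun x => by
    rcases le_total x 0 with hx | hx
    · exact ev0 x hx
    · have := ev0 (-x) (by linarith)
      rw [neg_neg] at this; exact this.symm
  refine ⟨u, u', hP, hd, hpos, hm, hE, ev, ?_⟩
  intro x hx y hy hxy
  have hx' : 0 ≤ x := hx
  rcases hxy.eq_or_lt with h | h
  · rw [h]
  · have := p1 (h := (x + y) / 2) (by linarith) (x := x) (by linarith)
    rwa [show 2 * ((x + y) / 2) - x = y by ring] at this

end GS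

theorem exists_symmetric_decreasing_ground_state (lam : ℝ) :
    ∃ ψmin : ℝ → ℝ,
      (∀ ξ : ℝ, 0 < ψmin ξ) ∧ (∀ ξ : ℝ, ψmin (-ξ) = ψmin ξ) ∧
      AntitoneOn ψmin (Set.Ici (0 : ℝ)) ∧
      InSigma1 (fun ξ => (ψmin ξ : ℂ)) ∧
      (∀ ψ : ℝ → ℂ, InSigma1 ψ →
        energy0 lam (fun ξ => (ψmin ξ : ℂ)) ≤ energy0 lam ψ) ∧
      (∀ ξ : ℝ, ψmin ξ ≤ ψmin 0) := by
  obtain ⟨u, u', hP, hd, hpos, hm, hE, ev, anti⟩ := GS.final lam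
  have hd' : ∀ x, HasDerivAt (fun x => (u x : ℂ)) (u' x : ℂ) x := fun x => (hd x).ofReal_comp
  have he : deriv (fun x => (u x : ℂ)) = fun x => (u' x : ℂ) := funext fun x => (hd' x).deriv
  have n4 : ∀ x, ‖(u x : ℂ)‖ ^ 4 = u x ^ 4 := fun x => by
    rw [Complex.norm_real, Real.norm_eq_abs, Even.pow_abs (show Even 4 by decide)]
  have n2 : ∀ x : ℝ, ‖(x : ℂ)‖ ^ 2 = x ^ 2 := fun x => by
    rw [Complex.norm_real, Real.norm_eq_abs, sq_abs]
  refine ⟨u, hpos, ev, anti, ⟨⟨fun x => (hd' x).differentiableAt, ?_, ?_, ?_, ?_⟩, ?_⟩, ?_, ?_⟩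
  · simp only [n2]; exact hP.mf.integrable_sq
  · rw [he]; simp only [n2]; exact hP.mg.integrable_sq
  · simp only [n2, ← mul_pow]; exact hP.mx.integrable_sq
  · simp only [n4]; exact hP.int4
  · simp only [n2]; exact hm
  · rintro ψ ⟨⟨h0, h1, h2, h3, h4⟩, h5⟩
    obtain ⟨g, hg, hb⟩ := GS.absPr h0 h1 h2 h3
    have a := GS.inf_le lam hg h5
    rw [← hE] at a
    have b : GS.S g ≤ ∫ ξ : ℝ, ‖deriv ψ ξ‖ ^ 2 := by
      refine integral_mono hg.mg.integrable_sq h2 fun x => ?_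
      have := hb x
      simp only
      rw [← sq_abs]
      exact pow_le_pow_left₀ (abs_nonneg _) this 2
    unfold energy0
    rw [he]
    simp only [n2, n4]
    unfold GS.En GS.N at a
    have e1 : GS.S (fun x => x * u x) = ∫ x : ℝ, x ^ 2 * u x ^ 2 := by simp [GS.S, mul_pow]
    have e2 : GS.S (fun x => x * ‖ψ x‖) = ∫ x : ℝ, x ^ 2 * ‖ψ x‖ ^ 2 := by simp [GS.S, mul_pow]
    rw [e1, e2] at a
    have e3 : GS.S u' = ∫ x, u' x ^ 2 := rfl
    rw [e3] at a
    linarith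
  · intro ξ
    rcases le_total 0 ξ with h | h
    · exact anti (Set.mem_Ici.2 le_rfl) h h
    · rw [← ev]
      exact anti (Set.mem_Ici.2 le_rfl) (Set.mem_Ici.2 (neg_nonneg.2 h)) (neg_nonneg.2 h)
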